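/- Let R be a commutative ring and let 0 → A →ι B →π C → 0 be a short exact sequence of R-modules. Assume C is projective and faithful. Then the map q : B̃ → R (sending f ∈ B̃ to the unique scalar r with π ∘ f = r • id_C) is a well-defined surjective R-linear map, and its kernel is exactly the image of the map Hom_R(C,A) → Hom_R(C,B) given by postcomposition with ι. In other words, 0 → Hom_R(C,A) → B̃ →q R → 0 is a short exact sequence of R-modules. (This is the module-theoretic construction underlying the passage from the Atiyah exact sequence (1) to the twisted Atiyah exact sequence (2) of the paper.) -/

import Mathlib

/-!
The sequence is the pullback of `0 → Hom(C, A) → Hom(C, B) → End(C) → 0`, which is exact because `C`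
is projective, along `R → End(C)`, `r ↦ r • id`, which is injective because `C` is faithful. A
pullback of a surjection is a surjection with the same kernel; since `R → End(C)` is injective, the
fibre product `Hom(C, B) ×_{End(C)} R` embeds into `Hom(C, B)`, with image `B̃`.
-/

section PullbackProjection

variable {R M N P : Type*} [Semiring R] [AddCommMonoid M] [AddCommMonoid N] [AddCommMonoid P]
  [Module R M] [Module R N] [Module R P]

/-- The projection to `P` from the fibre product of `φ : M → N` and an injective `j : P → N`. The
fibre product is encoded as the submodule `φ⁻¹(range j)` of `M`. -/
noncomputable def pullbackProjection (φ : M →ₗ[R] N) {j : P →ₗ[R] N}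
    (hj : Function.Injective j) : (LinearMap.range j).comap φ →ₗ[R] P :=
  (LinearEquiv.ofInjective j hj).symm ∘ₗ φ.submoduleComap (LinearMap.range j)

variable {φ : M →ₗ[R] N} {j : P →ₗ[R] N} (hj : Function.Injective j)

theorem apply_pullbackProjection (x : (LinearMap.range j).comap φ) :
    j (pullbackProjection φ hj x) = φ x :=
  LinearEquiv.ofInjective_symm_apply j (h := hj) (φ.submoduleComap _ x)

theorem pullbackProjection_surjective (hφ : LinearMap.range j ≤ LinearMap.range φ) :
    Function.Surjective (pullbackProjection φ hj) := fun p ↦ by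
  obtain ⟨x, hx⟩ := hφ (LinearMap.mem_range_self j p)
  exact ⟨⟨x, p, hx.symm⟩, hj ((apply_pullbackProjection hj _).trans hx)⟩

theorem pullbackProjection_eq_zero_iff (x : (LinearMap.range j).comap φ) :
    pullbackProjection φ hj x = 0 ↔ φ x = 0 := by
  rw [← apply_pullbackProjection hj, map_eq_zero_iff j hj]

theorem eq_pullbackProjection {q : (LinearMap.range j).comap φ →ₗ[R] P}
    (hq : ∀ x, j (q x) = φ x) : q = pullbackProjection φ hj :=
  LinearMap.ext fun x ↦ hj ((hq x).trans (apply_pullbackProjection hj x).symm)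

end PullbackProjection

theorem exact_linearMapComp_left_of_projective {R A B C P : Type*} [Semiring R]
    [AddCommMonoid A] [AddCommMonoid B] [AddCommMonoid C] [AddCommMonoid P]
    [Module R A] [Module R B] [Module R C] [Module R P] [Module.Projective R P]
    {f : A →ₗ[R] B} {g : B →ₗ[R] C} (hfg : Function.Exact f g) :
    Function.Exact (fun h : P →ₗ[R] A ↦ f ∘ₗ h) (fun h : P →ₗ[R] B ↦ g ∘ₗ h) := fun h ↦ by
  constructor
  · intro hgh
    have h_mem_range (x : P) : h x ∈ LinearMap.range f :=
      (hfg (h x)).1 (LinearMap.congr_fun hgh x)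
    obtain ⟨k, hk⟩ := Module.projective_lifting_property f.rangeRestrict
      (h.codRestrict (LinearMap.range f) h_mem_range) f.surjective_rangeRestrict
    exact ⟨k, LinearMap.ext fun x ↦ congrArg Subtype.val (LinearMap.congr_fun hk x)⟩
  · rintro ⟨k, rfl⟩
    exact LinearMap.ext fun x ↦ hfg.apply_apply_eq_zero (k x)

theorem toSpanSingleton_id_injective (R M : Type*) [CommSemiring R] [AddCommMonoid M] [Module R M]
    [FaithfulSMul R M] :
    Function.Injective (LinearMap.toSpanSingleton R (M →ₗ[R] M) LinearMap.id) :=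
  fun _ _ h ↦ FaithfulSMul.eq_of_smul_eq_smul (LinearMap.congr_fun h)

theorem faithfulSMul_of_smul_id_eq_zero {R M : Type*} [CommRing R] [AddCommGroup M] [Module R M]
    (h : ∀ r : R, r • (LinearMap.id : M →ₗ[R] M) = 0 → r = 0) : FaithfulSMul R M where
  eq_of_smul_eq_smul {r s} hrs :=
    sub_eq_zero.1 <| h (r - s) <| LinearMap.ext fun x ↦ by simp [sub_smul, hrs x]

theorem twisted_atiyah_exact_sequence_general
    {R A B C : Type*} [CommSemiring R] [AddCommMonoid A] [AddCommMonoid B] [AddCommMonoid C]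
    [Module R A] [Module R B] [Module R C] [Module.Projective R C] [FaithfulSMul R C]
    {ι : A →ₗ[R] B} {π : B →ₗ[R] C} (hπ : Function.Surjective π) (hexact : Function.Exact ι π)
    {Bt : Submodule R (C →ₗ[R] B)}
    (hBt : ∀ f : C →ₗ[R] B,
      f ∈ Bt ↔ ∃ r : R, π ∘ₗ f = r • (LinearMap.id : C →ₗ[R] C)) :
    ∃ q : Bt →ₗ[R] R,
      (∀ f : Bt, π ∘ₗ (f : C →ₗ[R] B) = q f • (LinearMap.id : C →ₗ[R] C)) ∧
      Function.Surjective q ∧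
      (∀ f : Bt, q f = 0 ↔ ∃ g : C →ₗ[R] A, ι ∘ₗ g = (f : C →ₗ[R] B)) ∧
      (∀ q' : Bt →ₗ[R] R,
        (∀ f : Bt, π ∘ₗ (f : C →ₗ[R] B) = q' f • (LinearMap.id : C →ₗ[R] C)) →
        q' = q) := by
  let scalar : R →ₗ[R] C →ₗ[R] C := LinearMap.toSpanSingleton R (C →ₗ[R] C) LinearMap.id
  have hscalar : Function.Injective scalar := toSpanSingleton_id_injective R C
  let Φ : (C →ₗ[R] B) →ₗ[R] C →ₗ[R] C := LinearMap.compRight R π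
  have hΦ : Function.Surjective Φ := hπ.surjective_linearMapComp_left
  obtain rfl : Bt = (LinearMap.range scalar).comap Φ :=
    Submodule.ext fun f ↦ (hBt f).trans (exists_congr fun _ ↦ eq_comm)
  refine ⟨pullbackProjection Φ hscalar, fun f ↦ (apply_pullbackProjection hscalar f).symm,
    pullbackProjection_surjective hscalar ?_, fun f ↦ ?_,
    fun q' hq' ↦ eq_pullbackProjection hscalar fun f ↦ (hq' f).symm⟩
  · exact le_top.trans (LinearMap.range_eq_top.2 hΦ).ge
  · exact (pullbackProjection_eq_zero_iff hscalar f).trans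
      (exact_linearMapComp_left_of_projective hexact (f : C →ₗ[R] B))

/-- Module-theoretic construction underlying the passage from the Atiyah exact
sequence to the twisted Atiyah exact sequence: given a short exact sequence
`0 → A → B → C → 0` of `R`-modules with `C` projective and faithful, and
`B̃ = {f : C →ₗ B | π ∘ f ∈ R • id}`, the map `q : B̃ → R` (sending `f` to the
unique `r` with `π ∘ f = r • id`) is a well-defined surjective `R`-linear map
whose kernel is exactly the image of `Hom(C,A) → Hom(C,B)`, `g ↦ ι ∘ g`. -/
theorem twisted_atiyah_exact_sequence
    (R : Type*) [CommRing R]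
    (A B C : Type*) [AddCommGroup A] [AddCommGroup B] [AddCommGroup C]
    [Module R A] [Module R B] [Module R C]
    (ι : A →ₗ[R] B) (π : B →ₗ[R] C)
    (hι : Function.Injective ι) (hπ : Function.Surjective π)
    (hexact : LinearMap.ker π = LinearMap.range ι)
    (hproj : Module.Projective R C)
    (hfaithful : ∀ r : R, r • (LinearMap.id : C →ₗ[R] C) = 0 → r = 0)
    (Bt : Submodule R (C →ₗ[R] B))
    (hBt : ∀ f : C →ₗ[R] B,
      f ∈ Bt ↔ ∃ r : R, π ∘ₗ f = r • (LinearMap.id : C →ₗ[R] C)) :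
    ∃ q : Bt →ₗ[R] R,
      (∀ f : Bt, π ∘ₗ (f : C →ₗ[R] B) = q f • (LinearMap.id : C →ₗ[R] C)) ∧
      Function.Surjective q ∧
      (∀ f : Bt, q f = 0 ↔ ∃ g : C →ₗ[R] A, ι ∘ₗ g = (f : C →ₗ[R] B)) ∧
      (∀ q' : Bt →ₗ[R] R,
        (∀ f : Bt, π ∘ₗ (f : C →ₗ[R] B) = q' f • (LinearMap.id : C →ₗ[R] C)) →
        q' = q) := by
  have := faithfulSMul_of_smul_id_eq_zero hfaithful
  exact twisted_atiyah_exact_sequence_general hπ (LinearMap.exact_iff.2 hexact) hBt
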